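/- Let Δ ∈ ℝᵈ satisfy ‖Δ‖₁ ≤ 2ε and |Δᵢ| ≤ 1 for all i, with 2ε < d. Then for any q ≥ 1, Σᵢ |Δᵢ|^q ≤ ⌊2ε⌋ + (2ε − ⌊2ε⌋)^q. -/

import Mathlib

open scoped BigOperators

lemma aux_convex (q : ℝ) (hq : 1 ≤ q) (r t : ℝ) (hr1 : r < 1) (ht1 : t ≤ 1)
    (h : 1 ≤ r + t) : r ^ q + t ^ q ≤ 1 + (r + t - 1) ^ q := by
  have hc := (convexOn_rpow hq).2
  have hD : 0 < 2 - r - t := by linarith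
  have m1 : (1:ℝ) ∈ Set.Ici (0:ℝ) := by simp
  have m2 : (r + t - 1) ∈ Set.Ici (0:ℝ) := by simp; linarith
  have ha : 0 ≤ (1 - t) / (2 - r - t) := div_nonneg (by linarith) hD.le
  have hb : 0 ≤ (1 - r) / (2 - r - t) := div_nonneg (by linarith) hD.le
  have hab : (1 - t) / (2 - r - t) + (1 - r) / (2 - r - t) = 1 := by
    field_simp; ring
  have h1 := hc m1 m2 ha hb hab
  have h2 := hc m1 m2 hb ha (by linarith)
  simp only [smul_eq_mul, Real.one_rpow, mul_one] at h1 h2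
  have e1 : (1 - t) / (2 - r - t) + (1 - r) / (2 - r - t) * (r + t - 1) = r := by
    field_simp; ring
  have e2 : (1 - r) / (2 - r - t) + (1 - t) / (2 - r - t) * (r + t - 1) = t := by
    field_simp; ring
  rw [e1] at h1
  rw [e2] at h2
  have : ((1 - t) / (2 - r - t) + (1 - r) / (2 - r - t)) * (1 + (r + t - 1) ^ q)
      = 1 + (r + t - 1) ^ q := by rw [hab, one_mul]
  linarith

lemma aux_step (q : ℝ) (hq : 1 ≤ q) (s t : ℝ) (ht0 : 0 ≤ t) (ht1 : t ≤ 1) :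
    (⌊s⌋ : ℝ) + (s - ⌊s⌋) ^ q + t ^ q ≤ (⌊s + t⌋ : ℝ) + (s + t - ⌊s + t⌋) ^ q := by
  have h0 := Int.floor_le s
  have h1 := Int.lt_floor_add_one s
  by_cases h : s - ⌊s⌋ + t < 1
  · have e : ⌊s + t⌋ = ⌊s⌋ := by
      rw [Int.floor_eq_iff]; constructor <;> linarith
    rw [e]
    have := Real.add_rpow_le_rpow_add (a := s - ⌊s⌋) (b := t) (by linarith) ht0 hq
    rw [show s + t - (⌊s⌋ : ℝ) = s - ⌊s⌋ + t by ring]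
    linarith
  · have e : ⌊s + t⌋ = ⌊s⌋ + 1 := by
      rw [Int.floor_eq_iff]; push_cast; constructor <;> linarith
    rw [e]
    have := aux_convex q hq (s - ⌊s⌋) t (by linarith) ht1 (by linarith)
    push_cast
    rw [show s + t - ((⌊s⌋ : ℝ) + 1) = s - ⌊s⌋ + t - 1 by ring]
    linarith

lemma aux_mono (q : ℝ) (hq : 1 ≤ q) (s t : ℝ) (hst : s ≤ t) :
    (⌊s⌋ : ℝ) + (s - ⌊s⌋) ^ q ≤ (⌊t⌋ : ℝ) + (t - ⌊t⌋) ^ q := by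
  have h0 := Int.floor_le s
  have h1 := Int.lt_floor_add_one s
  have h2 := Int.floor_le t
  rcases (Int.floor_mono hst).eq_or_lt with e | e
  · rw [← e]
    have := Real.rpow_le_rpow (x := s - ⌊s⌋) (y := t - ⌊s⌋) (z := q)
      (by linarith) (by linarith) (by linarith)
    linarith
  · have e' : (⌊s⌋ : ℝ) + 1 ≤ ⌊t⌋ := by exact_mod_cast e
    have := Real.rpow_le_one (x := s - ⌊s⌋) (z := q) (by linarith) (by linarith) (by linarith)
    have := Real.rpow_nonneg (x := t - ⌊t⌋) (by linarith) q
    linarith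

/-- l₁-budget case: bound on the coordinate-wise `q`-power sum. -/
theorem l1_perturbation_diff_power_sum_le
    {d : ℕ} (Δ : Fin d → ℝ) (ε : ℝ) (hε : 0 < ε) (hεd : 2 * ε < d)
    (hl1 : ∑ i, |Δ i| ≤ 2 * ε) (hbox : ∀ i, |Δ i| ≤ 1)
    (q : ℝ) (hq : 1 ≤ q) :
    (∑ i, |Δ i| ^ q) ≤ (⌊2 * ε⌋ : ℝ) + (2 * ε - ⌊2 * ε⌋) ^ q := by
  have key : ∀ S : Finset (Fin d), ∑ i ∈ S, |Δ i| ^ q ≤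
      (⌊∑ i ∈ S, |Δ i|⌋ : ℝ) + (∑ i ∈ S, |Δ i| - ⌊∑ i ∈ S, |Δ i|⌋) ^ q := by
    intro S
    induction S using Finset.induction_on with
    | empty => simp [Real.zero_rpow (show q ≠ 0 by linarith)]
    | insert a S ha ih =>
      rw [Finset.sum_insert ha, Finset.sum_insert ha, add_comm (|Δ a|)]
      have := aux_step q hq (∑ i ∈ S, |Δ i|) (|Δ a|) (abs_nonneg _) (hbox a)
      linarith
  exact (key Finset.univ).trans (aux_mono q hq _ _ hl1)
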